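/- arXiv:2204.08184 — 2 statements merged into one kernel-verified Lean document; each statement's English description precedes it below -/
import Mathlib

section
/- Let G be a connected simple graph and let 𝕊 be a nonempty family of spanning trees of G that is path covering, meaning that for every path p in G there exists some tree S in 𝕊 such that every edge of p is an edge of S. Then for all vertices u and v, the minimum over S in 𝕊 of the distance d_S(u,v) equals the distance d_G(u,v). -/
/-- Let `G` be a connected simple graph on a finite vertex type and
`𝕊` a nonempty family of spanning trees of `G` that is path covering: for every path
`p` in `G` there is some `S ∈ 𝕊` containing every edge of `p`. Then for all vertices
`u`, `v`, the minimum over `S ∈ 𝕊` of the distance `d_S(u, v)` equals `d_G(u, v)`. -/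
theorem path_covering_trees_dist {V : Type*} [Fintype V] (G : SimpleGraph V)
    (hG : G.Connected) (𝕊 : Set (SimpleGraph V)) (hne : 𝕊.Nonempty)
    (htree : ∀ S ∈ 𝕊, S ≤ G ∧ S.IsTree)
    (hcov : ∀ (u v : V) (p : G.Walk u v), p.IsPath →
      ∃ S ∈ 𝕊, ∀ e ∈ p.edges, e ∈ S.edgeSet)
    (u v : V) :
    sInf ((fun S : SimpleGraph V => S.dist u v) '' 𝕊) = G.dist u v := by
  apply le_antisymm
  · obtain ⟨p, hp, hl⟩ := hG.exists_path_of_dist u v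
    obtain ⟨S, hS, he⟩ := hcov u v p hp
    rw [← hl, ← SimpleGraph.Walk.length_transfer p he]
    exact (Nat.sInf_le (Set.mem_image_of_mem _ hS)).trans (SimpleGraph.dist_le _)
  · apply le_csInf (hne.image _)
    rintro _ ⟨S, hS, rfl⟩
    exact SimpleGraph.Reachable.dist_anti (htree S hS).1 ((htree S hS).2.connected u v)
end

section
/- For every n ≥ 1, the subgroup of the symmetric group on Fin n generated by the set of prefix reversals {r_i : 2 ≤ i ≤ n} is the whole symmetric group, i.e. every permutation of Fin n is a product of prefix reversals. -/
/-- The underlying function of the prefix reversal `r_i` on `Fin n`: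
it sends `j` to `i - 1 - j` for `j < i` and fixes `j` for `j ≥ i`. -/
def pancakeRevFun (n i : ℕ) (j : Fin n) : Fin n :=
  if h : j.val < i ∧ i ≤ n then ⟨i - 1 - j.val, by omega⟩ else j

lemma pancakeRevFun_involutive (n i : ℕ) :
    Function.Involutive (pancakeRevFun n i) := by
  intro j
  unfold pancakeRevFun
  by_cases h : j.val < i ∧ i ≤ n
  · rw [dif_pos h, dif_pos (by constructor <;> [dsimp; skip] <;> omega)]
    ext
    dsimp
    omega
  · rw [dif_neg h, dif_neg h]

/-- The prefix reversal `r_i` as a permutation of `Fin n`. -/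
def pancakeRev (n i : ℕ) : Equiv.Perm (Fin n) :=
  Function.Involutive.toPerm _ (pancakeRevFun_involutive n i)

lemma pancakeRev_mul_self (n i : ℕ) : pancakeRev n i * pancakeRev n i = 1 :=
  Equiv.ext fun j => pancakeRevFun_involutive n i j

/-- The pancake graph `P_n`: vertices are the permutations of `Fin n`, and `π` is
adjacent to `σ` iff `σ = π ∘ r_i` for some prefix reversal `r_i` with `2 ≤ i ≤ n`. -/
def pancakeGraph (n : ℕ) : SimpleGraph (Equiv.Perm (Fin n)) where
  Adj π σ := ∃ i, 2 ≤ i ∧ i ≤ n ∧ σ = π * pancakeRev n i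
  symm := by
    refine ⟨?_⟩
    rintro π σ ⟨i, h2, hn, rfl⟩
    exact ⟨i, h2, hn, by rw [mul_assoc, pancakeRev_mul_self, mul_one]⟩
  loopless := by
    refine ⟨?_⟩
    rintro π ⟨i, h2, hn, hπ⟩
    have hr : (1 : Equiv.Perm (Fin n)) = pancakeRev n i :=
      mul_left_cancel (a := π) (by rw [mul_one]; exact hπ)
    have hn1 : 0 < n := by omega
    have h1 : pancakeRevFun n i ⟨0, hn1⟩ = ⟨0, hn1⟩ := by
      show pancakeRev n i ⟨0, hn1⟩ = ⟨0, hn1⟩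
      rw [← hr]; rfl
    rw [pancakeRevFun,
      dif_pos ⟨show (0:ℕ) < i by omega, hn⟩] at h1
    have := congrArg Fin.val h1
    simp at this
    omega

/-- For every `n ≥ 1`, the subgroup of the symmetric group on `Fin n`
generated by the prefix reversals `{r_i : 2 ≤ i ≤ n}` is the whole symmetric group,
i.e. every permutation of `Fin n` is a product of prefix reversals. -/
theorem pancake_reversals_generate (n : ℕ) (hn : 1 ≤ n) :
    Subgroup.closure {r : Equiv.Perm (Fin n) | ∃ i, 2 ≤ i ∧ i ≤ n ∧ r = pancakeRev n i}
      = ⊤ := by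
  obtain ⟨m, rfl⟩ : ∃ m, n = m + 1 := ⟨n - 1, by omega⟩
  have hgen : ∀ i, 2 ≤ i → i ≤ m + 1 → pancakeRev (m + 1) i ∈ Subgroup.closure
      {r : Equiv.Perm (Fin (m + 1)) | ∃ i, 2 ≤ i ∧ i ≤ m + 1 ∧ r = pancakeRev (m + 1) i} :=
    fun i h2 h => Subgroup.subset_closure ⟨i, h2, h, rfl⟩
  have key : ∀ k : Fin m, Equiv.swap k.castSucc k.succ =
      pancakeRev (m + 1) (k.val + 2) * pancakeRev (m + 1) 2 * pancakeRev (m + 1) (k.val + 2) := by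
    intro k
    have hval : ∀ i, i ≤ m + 1 → ∀ j : Fin (m + 1),
        (pancakeRev (m + 1) i j).val = if j.val < i then i - 1 - j.val else j.val := by
      intro i hi j
      show (pancakeRevFun (m + 1) i j).val = _
      unfold pancakeRevFun
      by_cases h : j.val < i <;> simp [h, hi]
    have hk := k.isLt
    ext j
    have hj := j.isLt
    rw [Equiv.Perm.mul_apply, Equiv.Perm.mul_apply, hval _ (by omega), hval _ (by omega),
      hval _ (by omega), Equiv.swap_apply_def]
    simp only [Fin.ext_iff, apply_ite Fin.val, Fin.val_castSucc, Fin.val_succ]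
    split_ifs <;> omega
  have hle : Submonoid.closure (Set.range fun i : Fin m ↦ Equiv.swap i.castSucc i.succ) ≤
      (Subgroup.closure {r : Equiv.Perm (Fin (m + 1)) |
        ∃ i, 2 ≤ i ∧ i ≤ m + 1 ∧ r = pancakeRev (m + 1) i}).toSubmonoid := by
    rw [Submonoid.closure_le]
    rintro _ ⟨k, rfl⟩
    have hk := k.isLt
    show Equiv.swap k.castSucc k.succ ∈ Subgroup.closure _
    rw [key k]
    exact mul_mem (mul_mem (hgen _ (by omega) (by omega)) (hgen _ (by omega) (by omega)))
      (hgen _ (by omega) (by omega))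
  rw [Equiv.Perm.mclosure_swap_castSucc_succ] at hle
  exact eq_top_iff.mpr fun x _ => hle (Submonoid.mem_top x)
end
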